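/- For every M > 0 there exists a constant C > 0 depending only on M with the following property. Let T > 0 and let h, a, b, f : [1/2, 3/2] × [0, T] → ℝ be continuous, with h twice continuously differentiable in the first variable r and continuously differentiable in the second variable ι, satisfying ∂_ι h(r,ι) = a(r,ι) ∂²_r h(r,ι) + b(r,ι) ∂_r h(r,ι) + f(r,ι), a(r,ι) > 0, and |a(r,ι)| ≤ M, |b(r,ι)| ≤ M throughout the domain. Then for all 3/4 ≤ r ≤ 5/4 and 0 ≤ ι ≤ T: h(r,ι) ≤ max_{1/2 ≤ r' ≤ 3/2} h(r',0) + C·ι·(‖h‖_∞ + ‖f‖_∞), and h(r,ι) ≥ min_{1/2 ≤ r' ≤ 3/2} h(r',0) − C·ι·(‖h‖_∞ + ‖f‖_∞), where ‖·‖_∞ denotes the supremum norm over [1/2, 3/2] × [0, T]. -/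

import Mathlib

open Real Set

/-- The second derivative is nonpositive at an interior local maximum. -/
theorem IsLocalMax.deriv_deriv_nonpos {g : ℝ → ℝ} {x : ℝ} (hmax : IsLocalMax g x)
    (hc : ContinuousAt g x) : deriv (deriv g) x ≤ 0 := by
  by_contra! hpos
  have hmin := isLocalMin_of_deriv_deriv_pos hpos hmax.deriv_eq_zero hc
  have heq : g =ᶠ[nhds x] fun _ => g x := by
    filter_upwards [hmax, hmin] with y h₁ h₂ using le_antisymm h₁ h₂
  have := heq.deriv.deriv_eq
  simp only [deriv_const'] at this
  linarith

/-- The derivative is nonnegative at a point which maximizes the function over an interval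
to its left. -/
theorem deriv_nonneg_of_forall_le_left {g : ℝ → ℝ} {c t : ℝ} (hct : c < t)
    (hg : DifferentiableAt ℝ g t) (hmax : ∀ s ∈ Ioo c t, g s ≤ g t) : 0 ≤ deriv g t := by
  have hlim := (hasDerivWithinAt_iff_tendsto_slope' (s := Iio t) (by simp)).1
    hg.hasDerivAt.hasDerivWithinAt
  refine ge_of_tendsto hlim ?_
  filter_upwards [Ioo_mem_nhdsLT hct] with s hs
  rw [slope_def_field]
  exact div_nonneg_of_nonpos (by linarith [hmax s hs]) (by linarith [hs.2])

/-- Parabolic maximum principle on a rectangle: a function which is nonpositive on the parabolic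
boundary and has no candidate for a maximum elsewhere is nonpositive. -/
theorem nonpos_of_parabolic_boundary {x₀ x₁ T : ℝ} {w : ℝ → ℝ → ℝ}
    (hw : ContinuousOn (fun p : ℝ × ℝ => w p.1 p.2) (Icc x₀ x₁ ×ˢ Icc 0 T))
    (hr : ∀ t ∈ Icc 0 T, Continuous fun r => w r t)
    (ht : ∀ r ∈ Icc x₀ x₁, Differentiable ℝ fun t => w r t)
    (hinit : ∀ r ∈ Icc x₀ x₁, w r 0 ≤ 0)
    (hleft : ∀ t ∈ Icc 0 T, w x₀ t ≤ 0) (hright : ∀ t ∈ Icc 0 T, w x₁ t ≤ 0)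
    (hint : ∀ r ∈ Icc x₀ x₁, ∀ t ∈ Icc 0 T, 0 ≤ deriv (fun t => w r t) t →
      deriv (fun r => w r t) r = 0 → 0 < deriv (deriv fun r => w r t) r) :
    ∀ r ∈ Icc x₀ x₁, ∀ t ∈ Icc 0 T, w r t ≤ 0 := by
  intro r hrI t htI
  obtain ⟨⟨r₁, t₁⟩, ⟨hr₁, ht₁⟩, hmax⟩ :=
    (isCompact_Icc.prod isCompact_Icc).exists_isMaxOn ⟨(r, t), hrI, htI⟩ hw
  have hle : ∀ r' ∈ Icc x₀ x₁, ∀ t' ∈ Icc 0 T, w r' t' ≤ w r₁ t₁ :=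
    fun r' hr' t' ht' => hmax (show (r', t') ∈ Icc x₀ x₁ ×ˢ Icc 0 T from ⟨hr', ht'⟩)
  by_contra! hpos
  have hpos₁ : 0 < w r₁ t₁ := hpos.trans_le (hle r hrI t htI)
  simp only at hr₁ ht₁
  have ht₀ : 0 < t₁ := by
    refine ht₁.1.lt_of_ne ?_
    rintro rfl
    exact hpos₁.not_ge (hinit r₁ hr₁)
  have hlt₀ : x₀ < r₁ := by
    refine hr₁.1.lt_of_ne ?_
    rintro rfl
    exact hpos₁.not_ge (hleft t₁ ht₁)
  have hlt₁ : r₁ < x₁ := by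
    refine hr₁.2.lt_of_ne ?_
    rintro rfl
    exact hpos₁.not_ge (hright t₁ ht₁)
  have hloc : IsLocalMax (fun r => w r t₁) r₁ := by
    filter_upwards [Icc_mem_nhds hlt₀ hlt₁] with r' hr' using hle r' hr' t₁ ht₁
  have htime : 0 ≤ deriv (fun t => w r₁ t) t₁ :=
    deriv_nonneg_of_forall_le_left ht₀ (ht r₁ hr₁ t₁)
      fun s hs => hle r₁ hr₁ s ⟨hs.1.le, hs.2.le.trans ht₁.2⟩
  exact (hint r₁ hr₁ t₁ ht₁ htime hloc.deriv_eq_zero).not_ge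
    (hloc.deriv_deriv_nonpos (hr t₁ ht₁).continuousAt)

/-- The one-sided estimate, with arbitrary bounds `m`, `N`, `F` in place of the maximum of the
initial data and of the supremum norms. The barrier is a quadratic centred at the given point. -/
theorem le_of_parabolic_equation {M T m N F : ℝ} (hF : 0 ≤ F) {h a b f : ℝ → ℝ → ℝ}
    (hcont : ContinuousOn (fun p : ℝ × ℝ => h p.1 p.2) (Icc (1/2 : ℝ) (3/2) ×ˢ Icc (0 : ℝ) T))
    (hr : ∀ ι ∈ Icc (0 : ℝ) T, ContDiff ℝ 2 (fun r : ℝ => h r ι))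
    (ht : ∀ r ∈ Icc (1/2 : ℝ) (3/2), ContDiff ℝ 1 (fun ι : ℝ => h r ι))
    (heq : ∀ r ∈ Icc (1/2 : ℝ) (3/2), ∀ ι ∈ Icc (0 : ℝ) T,
      deriv (fun ι' : ℝ => h r ι') ι =
        a r ι * deriv (deriv (fun r' : ℝ => h r' ι)) r +
          b r ι * deriv (fun r' : ℝ => h r' ι) r + f r ι)
    (hab : ∀ r ∈ Icc (1/2 : ℝ) (3/2), ∀ ι ∈ Icc (0 : ℝ) T,
      0 < a r ι ∧ |a r ι| ≤ M ∧ |b r ι| ≤ M)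
    (hm : ∀ r ∈ Icc (1/2 : ℝ) (3/2), h r 0 ≤ m)
    (hN : ∀ r ∈ Icc (1/2 : ℝ) (3/2), ∀ ι ∈ Icc (0 : ℝ) T, |h r ι| ≤ N)
    (hfF : ∀ r ∈ Icc (1/2 : ℝ) (3/2), ∀ ι ∈ Icc (0 : ℝ) T, |f r ι| ≤ F)
    {r₀ t₀ : ℝ} (hr₀ : r₀ ∈ Icc (3/4 : ℝ) (5/4)) (ht₀ : t₀ ∈ Icc (0 : ℝ) T) :
    h r₀ t₀ ≤ m + (112 * M + 1) * t₀ * (N + F) := by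
  have hr₀' : r₀ ∈ Icc (1/2 : ℝ) (3/2) := ⟨by linarith [hr₀.1], by linarith [hr₀.2]⟩
  have h0T : (0 : ℝ) ∈ Icc (0 : ℝ) T := ⟨le_rfl, ht₀.1.trans ht₀.2⟩
  have hN0 : 0 ≤ N := (abs_nonneg _).trans (hN r₀ hr₀' t₀ ht₀)
  have hM0 : 0 ≤ M := (abs_nonneg _).trans (hab r₀ hr₀' t₀ ht₀).2.1
  have hmN : -N ≤ m := (neg_le_of_abs_le (hN r₀ hr₀' 0 h0T)).trans (hm r₀ hr₀')
  have hend : ∀ r ∈ Icc (1/2 : ℝ) (3/2), 1 ≤ 16 * (r - r₀) ^ 2 →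
      ∀ t ∈ Icc (0 : ℝ) T, ∀ K : ℝ, 0 ≤ K →
        h r t - (m + 32 * N * (r - r₀) ^ 2 + K * t) ≤ 0 := by
    intro r hrI hsq t htI K hK
    have h₁ := le_of_abs_le (hN r hrI t htI)
    have h₂ : 0 ≤ K * t := mul_nonneg hK htI.1
    nlinarith
  refine le_of_forall_pos_le_add fun δ hδ => ?_
  obtain ⟨ε, hε, hεδ⟩ : ∃ ε : ℝ, 0 < ε ∧ ε * t₀ ≤ δ := by
    have hpos : 0 < t₀ + 1 := by linarith [ht₀.1]
    refine ⟨δ / (t₀ + 1), by positivity, ?_⟩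
    rw [div_mul_eq_mul_div, div_le_iff₀ hpos]
    nlinarith
  set K : ℝ := (112 * M + 1) * (N + F) + ε with hK
  have hK0 : 0 ≤ K := by positivity
  have hmain := nonpos_of_parabolic_boundary
    (w := fun r t => h r t - (m + 32 * N * (r - r₀) ^ 2 + K * t))
    (x₀ := 1/2) (x₁ := 3/2) (T := T)
    (hcont.sub (by fun_prop))
    (fun t htI => (hr t htI).continuous.sub (by fun_prop))
    (fun r hrI => ((ht r hrI).differentiable one_ne_zero).sub (by fun_prop))
    (fun r hrI => by
      have := hm r hrI
      have : 0 ≤ 32 * N * (r - r₀) ^ 2 := by positivity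
      linarith)
    (fun t htI => hend _ (by norm_num) (by nlinarith [hr₀.1]) t htI K hK0)
    (fun t htI => hend _ (by norm_num) (by nlinarith [hr₀.2]) t htI K hK0)
    ?_ r₀ hr₀' t₀ ht₀
  · simp only [sub_self] at hmain
    linarith
  intro r hrI t htI htime hspace
  have dtime : deriv (fun t => h r t - (m + 32 * N * (r - r₀) ^ 2 + K * t)) t =
      deriv (fun t => h r t) t - K := by
    have h₁ := ((ht r hrI).differentiable one_ne_zero t).hasDerivAt
    have h₂ := ((hasDerivAt_id t).const_mul K).const_add (m + 32 * N * (r - r₀) ^ 2)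
    exact (h₁.sub h₂).deriv.trans (by simp)
  have dspace : deriv (fun r => h r t - (m + 32 * N * (r - r₀) ^ 2 + K * t)) =
      fun r => deriv (fun r => h r t) r - 64 * N * (r - r₀) := by
    funext s
    have h₁ := ((hr t htI).differentiable two_ne_zero s).hasDerivAt
    have h₂ := (((((hasDerivAt_id s).sub_const r₀).pow 2).const_mul (32 * N)).const_add
      m).add_const (K * t)
    refine (h₁.sub h₂).deriv.trans ?_
    simp
    ring
  have dspace₂ : deriv (deriv fun r => h r t - (m + 32 * N * (r - r₀) ^ 2 + K * t)) r =
      deriv (deriv fun r => h r t) r - 64 * N := by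
    rw [dspace]
    have h₀ : ContDiff ℝ 1 (deriv fun r => h r t) :=
      ((contDiff_succ_iff_deriv (n := 1)).1 (hr t htI)).2.2
    have h₁ := (h₀.differentiable one_ne_zero r).hasDerivAt
    have h₂ := ((hasDerivAt_id r).sub_const r₀).const_mul (64 * N)
    exact (h₁.sub h₂).deriv.trans (by simp)
  rw [dtime, heq r hrI t htI] at htime
  rw [dspace] at hspace
  simp only at hspace
  rw [dspace₂]
  by_contra! hneg
  obtain ⟨ha, haM, hbM⟩ := hab r hrI t htI
  have hspace' : deriv (fun r => h r t) r = 64 * N * (r - r₀) := by linarith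
  have hsecond : a r t * deriv (deriv fun r => h r t) r ≤ M * (64 * N) :=
    (mul_le_mul_of_nonneg_left (by linarith) ha.le).trans
      (mul_le_mul_of_nonneg_right (le_of_abs_le haM) (by positivity))
  have hdist : |r - r₀| ≤ 3/4 :=
    abs_le.2 ⟨by linarith [hrI.1, hr₀.2], by linarith [hrI.2, hr₀.1]⟩
  have hfirst : b r t * deriv (fun r => h r t) r ≤ M * (48 * N) := by
    rw [hspace']
    refine (le_abs_self _).trans ?_
    rw [abs_mul]
    refine mul_le_mul hbM ?_ (abs_nonneg _) hM0
    rw [abs_mul, abs_of_nonneg (by positivity : 0 ≤ 64 * N)]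
    nlinarith
  have hf := le_of_abs_le (hfF r hrI t htI)
  have : 0 ≤ M * F := by positivity
  nlinarith

/-- In `ℝ`, a value at a point of `s` is bounded by the iterated supremum over `s`, provided the
function is bounded above on `s`. -/
theorem Real.le_biSup_of_bddAbove {α : Type*} {s : Set α} {g : α → ℝ} (hg : BddAbove (g '' s))
    {x : α} (hx : x ∈ s) : g x ≤ ⨆ y ∈ s, g y := by
  obtain ⟨B, hB⟩ := hg
  have hbdd : BddAbove (range fun y => ⨆ _ : y ∈ s, g y) := by
    refine ⟨max B 0, ?_⟩
    rintro _ ⟨y, rfl⟩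
    exact Real.iSup_le (fun hy => (hB (mem_image_of_mem g hy)).trans (le_max_left _ _))
      (le_max_right _ _)
  refine le_trans ?_ (le_ciSup hbdd x)
  simp [hx]

/-- In `ℝ`, a value at a point of `s` is bounded below by the iterated infimum over `s`, provided
the function is bounded below on `s`. -/
theorem Real.biInf_le_of_bddBelow {α : Type*} {s : Set α} {g : α → ℝ} (hg : BddBelow (g '' s))
    {x : α} (hx : x ∈ s) : ⨅ y ∈ s, g y ≤ g x := by
  obtain ⟨B, hB⟩ := hg
  have hbdd : BddBelow (range fun y => ⨅ _ : y ∈ s, g y) := by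
    refine ⟨min B 0, ?_⟩
    rintro _ ⟨y, rfl⟩
    exact Real.le_iInf (fun hy => (min_le_left _ _).trans (hB (mem_image_of_mem g hy)))
      (min_le_right _ _)
  refine (ciInf_le hbdd x).trans ?_
  simp [hx]

/-- Short-time continuity estimate for a linear uniformly parabolic equation
`∂_ι h = a ∂²_r h + b ∂_r h + f` on `[1/2,3/2] × [0,T]` with `0 < a` and `|a|, |b| ≤ M`:
for `3/4 ≤ r ≤ 5/4` and `0 ≤ ι ≤ T`,
`h(r,ι) ≤ max_{r'} h(r',0) + C ι (‖h‖_∞ + ‖f‖_∞)` and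
`h(r,ι) ≥ min_{r'} h(r',0) − C ι (‖h‖_∞ + ‖f‖_∞)`, with `C = C(M)`. -/
theorem short_time_continuity (M : ℝ) (hM : 0 < M) :
    ∃ C : ℝ, 0 < C ∧
      ∀ (T : ℝ), 0 < T → ∀ h a b f : ℝ → ℝ → ℝ,
        ContinuousOn (fun p : ℝ × ℝ => h p.1 p.2) (Icc (1/2 : ℝ) (3/2) ×ˢ Icc (0 : ℝ) T) →
        ContinuousOn (fun p : ℝ × ℝ => a p.1 p.2) (Icc (1/2 : ℝ) (3/2) ×ˢ Icc (0 : ℝ) T) →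
        ContinuousOn (fun p : ℝ × ℝ => b p.1 p.2) (Icc (1/2 : ℝ) (3/2) ×ˢ Icc (0 : ℝ) T) →
        ContinuousOn (fun p : ℝ × ℝ => f p.1 p.2) (Icc (1/2 : ℝ) (3/2) ×ˢ Icc (0 : ℝ) T) →
        (∀ ι ∈ Icc (0 : ℝ) T, ContDiff ℝ 2 (fun r : ℝ => h r ι)) →
        (∀ r ∈ Icc (1/2 : ℝ) (3/2), ContDiff ℝ 1 (fun ι : ℝ => h r ι)) →
        (∀ r ∈ Icc (1/2 : ℝ) (3/2), ∀ ι ∈ Icc (0 : ℝ) T,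
          deriv (fun ι' : ℝ => h r ι') ι =
            a r ι * deriv (deriv (fun r' : ℝ => h r' ι)) r +
              b r ι * deriv (fun r' : ℝ => h r' ι) r + f r ι) →
        (∀ r ∈ Icc (1/2 : ℝ) (3/2), ∀ ι ∈ Icc (0 : ℝ) T,
          0 < a r ι ∧ |a r ι| ≤ M ∧ |b r ι| ≤ M) →
        ∀ r ∈ Icc (3/4 : ℝ) (5/4), ∀ ι ∈ Icc (0 : ℝ) T,
          (h r ι ≤ (⨆ r' ∈ Icc (1/2 : ℝ) (3/2), h r' 0) +
            C * ι * ((⨆ p ∈ Icc (1/2 : ℝ) (3/2) ×ˢ Icc (0 : ℝ) T, |h p.1 p.2|) +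
              (⨆ p ∈ Icc (1/2 : ℝ) (3/2) ×ˢ Icc (0 : ℝ) T, |f p.1 p.2|))) ∧
          ((⨅ r' ∈ Icc (1/2 : ℝ) (3/2), h r' 0) -
            C * ι * ((⨆ p ∈ Icc (1/2 : ℝ) (3/2) ×ˢ Icc (0 : ℝ) T, |h p.1 p.2|) +
              (⨆ p ∈ Icc (1/2 : ℝ) (3/2) ×ˢ Icc (0 : ℝ) T, |f p.1 p.2|)) ≤ h r ι) := by
  refine ⟨112 * M + 1, by positivity, ?_⟩
  intro T hT h a b f hh _ _ hf hr ht heq hab r₀ hr₀ t₀ ht₀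
  set N := ⨆ p ∈ Icc (1/2 : ℝ) (3/2) ×ˢ Icc (0 : ℝ) T, |h p.1 p.2|
  set F := ⨆ p ∈ Icc (1/2 : ℝ) (3/2) ×ˢ Icc (0 : ℝ) T, |f p.1 p.2|
  have hcompact : IsCompact (Icc (1/2 : ℝ) (3/2) ×ˢ Icc (0 : ℝ) T) :=
    isCompact_Icc.prod isCompact_Icc
  have hN : ∀ r ∈ Icc (1/2 : ℝ) (3/2), ∀ ι ∈ Icc (0 : ℝ) T, |h r ι| ≤ N := fun r hrI t htI =>
    Real.le_biSup_of_bddAbove (g := fun p : ℝ × ℝ => |h p.1 p.2|)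
      (hcompact.bddAbove_image hh.abs) (mk_mem_prod hrI htI)
  have hfF : ∀ r ∈ Icc (1/2 : ℝ) (3/2), ∀ ι ∈ Icc (0 : ℝ) T, |f r ι| ≤ F := fun r hrI t htI =>
    Real.le_biSup_of_bddAbove (g := fun p : ℝ × ℝ => |f p.1 p.2|)
      (hcompact.bddAbove_image hf.abs) (mk_mem_prod hrI htI)
  have hinit : ContinuousOn (fun r => h r 0) (Icc (1/2 : ℝ) (3/2)) :=
    (hr 0 ⟨le_rfl, hT.le⟩).continuous.continuousOn
  have hF : 0 ≤ F := (abs_nonneg _).trans (hfF 1 (by norm_num) t₀ ht₀)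
  constructor
  · exact le_of_parabolic_equation hF hh hr ht heq hab
      (fun r hrI => Real.le_biSup_of_bddAbove (g := fun r => h r 0)
        (isCompact_Icc.bddAbove_image hinit) hrI) hN hfF hr₀ ht₀
  · have hneg := le_of_parabolic_equation (h := fun r t => -h r t) (f := fun r t => -f r t)
      (m := -⨅ r' ∈ Icc (1/2 : ℝ) (3/2), h r' 0) hF hh.neg (fun t htI => (hr t htI).neg)
      (fun r hrI => (ht r hrI).neg)
      (fun r hrI t htI => by
        simp only [deriv.fun_neg', deriv.fun_neg]
        rw [heq r hrI t htI]
        ring)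
      hab
      (fun r hrI => neg_le_neg (Real.biInf_le_of_bddBelow (g := fun r => h r 0)
        (isCompact_Icc.bddBelow_image hinit) hrI))
      (fun r hrI t htI => by simpa using hN r hrI t htI)
      (fun r hrI t htI => by simpa using hfF r hrI t htI) hr₀ ht₀
    linarith
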